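/- Let U ⊆ ℝ⁴ be open and D : U → ℝ smooth and nowhere vanishing. The Ricci tensor of the reduced Lychagin–Rubtsov metric G_D (computed from the coordinate Christoffel symbols and curvature tensor) vanishes identically on U if and only if D satisfies on U the system: 3 D_i² − 2 D D_{ii} = 0 for each i ∈ {x, y, p, q}; 3 D_x D_y − 2 D D_{xy} = 0, 3 D_x D_q − 2 D D_{xq} = 0, 3 D_p D_y − 2 D D_{py} = 0, 3 D_p D_q − 2 D D_{pq} = 0; and −2 D D_{yq} + 3 D_x D_p − 4 D D_{xp} = 0, −2 D D_{xp} + 3 D_y D_q − 4 D D_{yq} = 0, where subscripts denote partial derivatives in the coordinates (x, y, p, q). -/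

import Mathlib

/-- Partial derivative of `f : ℝ⁴ → ℝ` in the `i`-th coordinate direction. -/
noncomputable def pd (i : Fin 4) (f : (Fin 4 → ℝ) → ℝ) (u : Fin 4 → ℝ) : ℝ :=
  fderiv ℝ f u (Pi.single i 1)

/-- Christoffel symbols `Γᵏᵢⱼ` of a matrix-valued metric `g` in coordinates. -/
noncomputable def christoffel (g : (Fin 4 → ℝ) → Matrix (Fin 4) (Fin 4) ℝ)
    (k i j : Fin 4) (u : Fin 4 → ℝ) : ℝ :=
  (1 / 2) * ∑ l, (g u)⁻¹ k l *
    (pd i (fun v => g v j l) u + pd j (fun v => g v i l) u - pd l (fun v => g v i j) u)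

/-- Curvature tensor `Rˡᵢⱼₖ` of a matrix-valued metric `g` in coordinates. -/
noncomputable def riemann (g : (Fin 4 → ℝ) → Matrix (Fin 4) (Fin 4) ℝ)
    (l i j k : Fin 4) (u : Fin 4 → ℝ) : ℝ :=
  pd j (christoffel g l i k) u - pd k (christoffel g l i j) u +
    ∑ m, (christoffel g l j m u * christoffel g m i k u -
          christoffel g l k m u * christoffel g m i j u)

/-- Ricci tensor `Ricᵢₖ = Σₗ Rˡᵢₗₖ`. -/
noncomputable def ricci (g : (Fin 4 → ℝ) → Matrix (Fin 4) (Fin 4) ℝ)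
    (i k : Fin 4) (u : Fin 4 → ℝ) : ℝ :=
  ∑ l, riemann g l i l k u

/-- Scalar curvature `R = Σᵢₖ (g⁻¹)ⁱᵏ Ricᵢₖ`. -/
noncomputable def scalarCurv (g : (Fin 4 → ℝ) → Matrix (Fin 4) (Fin 4) ℝ)
    (u : Fin 4 → ℝ) : ℝ :=
  ∑ i, ∑ k, (g u)⁻¹ i k * ricci g i k u

/-- The reduced Lychagin–Rubtsov metric associated with `D : ℝ⁴ → ℝ`. -/
noncomputable def GD (D : (Fin 4 → ℝ) → ℝ) (u : Fin 4 → ℝ) :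
    Matrix (Fin 4) (Fin 4) ℝ :=
  !![0, 0, D u, 0;
     0, 0, 0, D u;
     D u, 0, 0, 0;
     0, D u, 0, 0]

/-!
The metric `G_D = D η` is conformal to a constant form `η`, so with `θ = dD / (2 D)` its Christoffel
symbols are the entries of the matrices `θᵢ 1 + eᵢ ⊗ θ - θ♯ ⊗ ηᵢ`. In dimension four the
`|θ|² η` terms of the contracted curvature cancel, which leaves
`2 D² Ricᵢₖ = 3 Dᵢ Dₖ - 2 D Dᵢₖ - D tr(η⁻¹ Hess D) ηᵢₖ`, with `tr(η⁻¹ Hess D) = 2 (D_xp + D_yq)`.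
As `η` is supported on the pairs `xp` and `yq`, the trace enters only the last two equations.
-/

open Matrix
open scoped Topology

section ConnectionMatrix

variable {ι R : Type*} [Fintype ι] [DecidableEq ι] [CommRing R]

/-- The matrix `(Γᵏᵢⱼ)ₖⱼ` of the Levi-Civita connection of the conformally flat metric `e^{2φ} η`
in the direction of the `i`-th coordinate, in terms of the covector `θ = dφ`:
`Γᵏᵢⱼ = δᵏⱼ θᵢ + δᵏᵢ θⱼ - ηᵢⱼ θᵏ`. -/
noncomputable def connectionMatrix (η : Matrix ι ι R) (θ : ι → R) (i : ι) : Matrix ι ι R :=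
  θ i • 1 + vecMulVec (Pi.single i 1) θ - vecMulVec (η⁻¹ *ᵥ θ) (η i)

variable {η : Matrix ι ι R}

lemma connectionMatrix_apply (η : Matrix ι ι R) (θ : ι → R) (i k j : ι) :
    connectionMatrix η θ i k j =
      (1 : Matrix ι ι R) k j * θ i + (1 : Matrix ι ι R) k i * θ j - (η⁻¹ *ᵥ θ) k * η i j := by
  simp [connectionMatrix, vecMulVec_apply, one_apply, Pi.single_apply]

lemma connectionMatrix_comm (hη : η.IsSymm) (θ : ι → R) (i j k : ι) :
    connectionMatrix η θ i k j = connectionMatrix η θ j k i := by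
  rw [connectionMatrix_apply, connectionMatrix_apply, hη.apply i j]
  ring

lemma row_dotProduct_inv_mulVec (hdet : IsUnit η.det) (θ : ι → R) (i : ι) :
    η i ⬝ᵥ η⁻¹ *ᵥ θ = θ i := by
  change (η *ᵥ (η⁻¹ *ᵥ θ)) i = θ i
  rw [mulVec_mulVec, mul_nonsing_inv η hdet, one_mulVec]

lemma trace_connectionMatrix (hdet : IsUnit η.det) (θ : ι → R) (i : ι) :
    (connectionMatrix η θ i).trace = Fintype.card ι * θ i := by
  simp only [connectionMatrix, trace_sub, trace_add, trace_smul, trace_one, trace_vecMulVec,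
    single_one_dotProduct, dotProduct_comm (η⁻¹ *ᵥ θ), row_dotProduct_inv_mulVec hdet, smul_eq_mul]
  ring

lemma vecMul_connectionMatrix (θ : ι → R) (i k : ι) :
    (θ ᵥ* connectionMatrix η θ i) k = 2 * (θ i * θ k) - (θ ⬝ᵥ η⁻¹ *ᵥ θ) * η i k := by
  simp only [connectionMatrix, vecMul_sub, vecMul_add, vecMul_smul, vecMul_one, vecMul_vecMulVec,
    dotProduct_single_one, Pi.sub_apply, Pi.add_apply, Pi.smul_apply, smul_eq_mul]
  ring

lemma trace_connectionMatrix_mul (hη : η.IsSymm) (hdet : IsUnit η.det) (θ : ι → R) (i k : ι) :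
    (connectionMatrix η θ k * connectionMatrix η θ i).trace =
      (Fintype.card ι + 2) * (θ i * θ k) - 2 * (θ ⬝ᵥ η⁻¹ *ᵥ θ) * η i k := by
  simp only [connectionMatrix, mul_sub, mul_add, sub_mul, add_mul, smul_mul, Matrix.mul_smul,
    Matrix.one_mul, Matrix.mul_one, vecMulVec_mul_vecMulVec, trace_sub, trace_add, trace_smul,
    trace_one, trace_vecMulVec, smul_dotProduct, dotProduct_smul, single_one_dotProduct,
    dotProduct_single_one, dotProduct_comm (η⁻¹ *ᵥ θ), row_dotProduct_inv_mulVec hdet,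
    hη.apply i k, smul_eq_mul]
  ring

lemma sum_connectionMatrix_quadratic (hη : η.IsSymm) (hdet : IsUnit η.det) (θ : ι → R)
    (i k : ι) :
    ∑ l, ∑ m, (connectionMatrix η θ l l m * connectionMatrix η θ i m k -
        connectionMatrix η θ k l m * connectionMatrix η θ i m l) =
      (Fintype.card ι - 2) * (θ i * θ k - (θ ⬝ᵥ η⁻¹ *ᵥ θ) * η i k) := by
  have hfirst : ∑ l, ∑ m, connectionMatrix η θ l l m * connectionMatrix η θ i m k =
      Fintype.card ι * (θ ᵥ* connectionMatrix η θ i) k := by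
    rw [Finset.sum_comm]
    simp_rw [connectionMatrix_comm hη θ _ _, ← Finset.sum_mul, vecMul, dotProduct, Finset.mul_sum,
      ← mul_assoc, ← trace_connectionMatrix hdet]
    rfl
  have hsecond : ∑ l, ∑ m, connectionMatrix η θ k l m * connectionMatrix η θ i m l =
      (connectionMatrix η θ k * connectionMatrix η θ i).trace := by
    simp only [trace, diag_apply, mul_apply]
  simp only [Finset.sum_sub_distrib, hfirst, hsecond, vecMul_connectionMatrix,
    trace_connectionMatrix_mul hη hdet]
  ring

lemma sum_connectionMatrix_row (ψ : Matrix ι ι R) (i k : ι) :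
    ∑ l, connectionMatrix η (ψ l) i l k = ψ k i + ψ i k - (η⁻¹ * ψᵀ).trace * η i k := by
  have htrace : ∑ l, (η⁻¹ *ᵥ ψ l) l = (η⁻¹ * ψᵀ).trace := rfl
  simp [connectionMatrix_apply, one_apply, Finset.sum_add_distrib, ← Finset.sum_mul, htrace]

end ConnectionMatrix

section PartialDerivative

variable {f : (Fin 4 → ℝ) → ℝ} {u : Fin 4 → ℝ}

lemma pd_congr_of_eventuallyEq {g : (Fin 4 → ℝ) → ℝ} (h : f =ᶠ[𝓝 u] g) (i : Fin 4) :
    pd i f u = pd i g u := by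
  rw [pd, pd, h.fderiv_eq]

lemma pd_mul_const (hf : DifferentiableAt ℝ f u) (c : ℝ) (i : Fin 4) :
    pd i (fun v => f v * c) u = pd i f u * c := by
  rw [pd, fderiv_mul_const hf, _root_.smul_apply, smul_eq_mul, mul_comm, pd]

lemma pd_div {g : (Fin 4 → ℝ) → ℝ} (hf : DifferentiableAt ℝ f u) (hg : DifferentiableAt ℝ g u)
    (hu : g u ≠ 0) (i : Fin 4) :
    pd i (fun v => f v / g v) u = (pd i f u * g u - f u * pd i g u) / g u ^ 2 := by
  have hquot := hf.hasFDerivAt.fun_mul ((hasDerivAt_inv hu).comp_hasFDerivAt u hg.hasFDerivAt)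
  simp only [Function.comp_apply, ← div_eq_mul_inv] at hquot
  rw [pd, hquot.fderiv]
  simp only [neg_smul, smul_neg, _root_.add_apply, _root_.neg_apply, _root_.smul_apply, smul_eq_mul,
    pd]
  field_simp
  ring

lemma differentiableAt_fderiv (hf : ContDiffAt ℝ 2 f u) : DifferentiableAt ℝ (fderiv ℝ f) u :=
  (hf.fderiv_right (m := 1) (by norm_num)).differentiableAt one_ne_zero

lemma differentiableAt_pd (hf : ContDiffAt ℝ 2 f u) (i : Fin 4) :
    DifferentiableAt ℝ (pd i f) u :=
  (differentiableAt_fderiv hf).clm_apply (differentiableAt_const _)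

lemma pd_pd_eq_fderiv_fderiv (hf : ContDiffAt ℝ 2 f u) (i j : Fin 4) :
    pd i (pd j f) u = fderiv ℝ (fderiv ℝ f) u (Pi.single i 1) (Pi.single j 1) := by
  change fderiv ℝ (fun v => fderiv ℝ f v (Pi.single j 1)) u _ = _
  rw [fderiv_clm_apply (differentiableAt_fderiv hf) (differentiableAt_const _)]
  simp

lemma pd_pd_comm (hf : ContDiffAt ℝ 2 f u) (i j : Fin 4) :
    pd i (pd j f) u = pd j (pd i f) u := by
  rw [pd_pd_eq_fderiv_fderiv hf, pd_pd_eq_fderiv_fderiv hf]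
  exact (hf.isSymmSndFDerivAt (by simp)).eq _ _

/-- The matrix of second partial derivatives of a function. -/
noncomputable def coordHessian (f : (Fin 4 → ℝ) → ℝ) (u : Fin 4 → ℝ) :
    Matrix (Fin 4) (Fin 4) ℝ :=
  of fun i j => pd i (pd j f) u

lemma isSymm_coordHessian (hf : ContDiffAt ℝ 2 f u) : (coordHessian f u).IsSymm :=
  IsSymm.ext fun i j => pd_pd_comm hf j i

lemma pd_connectionMatrix {θ : (Fin 4 → ℝ) → Fin 4 → ℝ}
    (hθ : ∀ i, DifferentiableAt ℝ (fun v => θ v i) u) (η : Matrix (Fin 4) (Fin 4) ℝ)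
    (m i k j : Fin 4) :
    pd m (fun v => connectionMatrix η (θ v) i k j) u =
      connectionMatrix η (fun a => pd m (fun v => θ v a) u) i k j := by
  have hraised : HasFDerivAt (fun v => (η⁻¹ *ᵥ θ v) k)
      (∑ l, η⁻¹ k l • fderiv ℝ (fun v => θ v l) u) u :=
    HasFDerivAt.fun_sum (u := Finset.univ) fun l _ => (hθ l).hasFDerivAt.const_mul (η⁻¹ k l)
  have hentry := (((hθ i).hasFDerivAt.const_mul ((1 : Matrix (Fin 4) (Fin 4) ℝ) k j)).fun_add
    ((hθ j).hasFDerivAt.const_mul ((1 : Matrix (Fin 4) (Fin 4) ℝ) k i))).fun_sub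
      (hraised.mul_const (η i j))
  simp only [connectionMatrix_apply]
  rw [pd, hentry.fderiv]
  simp [mulVec, dotProduct, pd, mul_comm (η i j)]

end PartialDerivative

section ConformallyFlat

/-- The covector `dφ = dD / (2 D)` attached to a conformal factor `D = ± e^{2φ}`. -/
noncomputable def conformalCovector (D : (Fin 4 → ℝ) → ℝ) (u : Fin 4 → ℝ) (i : Fin 4) : ℝ :=
  pd i D u / (2 * D u)

variable {D : (Fin 4 → ℝ) → ℝ} {u : Fin 4 → ℝ} {η : Matrix (Fin 4) (Fin 4) ℝ}

lemma differentiableAt_conformalCovector (hD : ContDiffAt ℝ 2 D u) (hu : D u ≠ 0) (i : Fin 4) :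
    DifferentiableAt ℝ (fun v => conformalCovector D v i) u :=
  (differentiableAt_pd hD i).mul
    (((hD.differentiableAt two_ne_zero).const_mul 2).inv (mul_ne_zero two_ne_zero hu))

/-- The matrix of partial derivatives `∂ᵢ θⱼ` of `θ = conformalCovector D`, i.e. the flat Hessian
of `φ` for `D = ± e^{2φ}`. -/
noncomputable def conformalJacobian (D : (Fin 4 → ℝ) → ℝ) (u : Fin 4 → ℝ) :
    Matrix (Fin 4) (Fin 4) ℝ :=
  of fun i j => pd i (fun v => conformalCovector D v j) u

lemma conformalJacobian_eq (hD : ContDiffAt ℝ 2 D u) (hu : D u ≠ 0) :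
    conformalJacobian D u = (2 * D u)⁻¹ • coordHessian D u -
      (2 : ℝ) • vecMulVec (conformalCovector D u) (conformalCovector D u) := by
  have hdiff := hD.differentiableAt two_ne_zero
  have hdouble (i : Fin 4) : pd i (fun v => 2 * D v) u = 2 * pd i D u := by
    simpa only [mul_comm] using pd_mul_const hdiff 2 i
  ext i j
  simp only [conformalJacobian, conformalCovector, of_apply,
    pd_div (differentiableAt_pd hD j) (hdiff.const_mul 2) (mul_ne_zero two_ne_zero hu), hdouble,
    coordHessian, Matrix.sub_apply, Matrix.smul_apply, vecMulVec_apply, smul_eq_mul]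
  field_simp

lemma isSymm_conformalJacobian (hD : ContDiffAt ℝ 2 D u) (hu : D u ≠ 0) :
    (conformalJacobian D u).IsSymm := by
  rw [conformalJacobian_eq hD hu, IsSymm, transpose_sub, transpose_smul, transpose_smul,
    transpose_vecMulVec, isSymm_coordHessian hD]

lemma christoffel_smul (hη : η.IsSymm) (hdet : IsUnit η.det) (hD : DifferentiableAt ℝ D u)
    (hu : D u ≠ 0) (k i j : Fin 4) :
    christoffel (fun v => D v • η) k i j u =
      connectionMatrix η (conformalCovector D u) i k j := by
  have hinv : (D u • η)⁻¹ = (D u)⁻¹ • η⁻¹ := inv_smul' η (Units.mk0 _ hu) hdet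
  have hcontract (j : Fin 4) : ∑ l, η⁻¹ k l * η j l = (1 : Matrix (Fin 4) (Fin 4) ℝ) k j := by
    rw [← nonsing_inv_mul η hdet, mul_apply]
    simp only [hη.apply]
  have hraised : (η⁻¹ *ᵥ conformalCovector D u) k = (∑ l, η⁻¹ k l * pd l D u) / (2 * D u) := by
    simp only [mulVec, dotProduct, conformalCovector, Finset.sum_div, mul_div_assoc]
  calc christoffel (fun v => D v • η) k i j u
      = 1 / 2 * ∑ l, (D u)⁻¹ * η⁻¹ k l *
          (pd i D u * η j l + pd j D u * η i l - pd l D u * η i j) := by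
        simp only [christoffel, hinv, Matrix.smul_apply, smul_eq_mul, pd_mul_const hD]
    _ = (2 * D u)⁻¹ * ((∑ l, η⁻¹ k l * η j l) * pd i D u + (∑ l, η⁻¹ k l * η i l) * pd j D u -
          (∑ l, η⁻¹ k l * pd l D u) * η i j) := by
        simp only [Finset.sum_mul, Finset.mul_sum, ← Finset.sum_add_distrib,
          ← Finset.sum_sub_distrib]
        refine Finset.sum_congr rfl fun l _ => ?_
        field_simp
    _ = connectionMatrix η (conformalCovector D u) i k j := by
        rw [hcontract, hcontract, connectionMatrix_apply, hraised, conformalCovector,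
          conformalCovector]
        ring

lemma pd_christoffel_smul (hη : η.IsSymm) (hdet : IsUnit η.det) (hD : ContDiffAt ℝ 2 D u)
    (hu : D u ≠ 0) (m k i j : Fin 4) :
    pd m (christoffel (fun v => D v • η) k i j) u =
      connectionMatrix η (conformalJacobian D u m) i k j := by
  refine Eq.trans ?_ (pd_connectionMatrix (differentiableAt_conformalCovector hD hu) η m i k j)
  refine pd_congr_of_eventuallyEq ?_ m
  filter_upwards [hD.eventually (by simp), hD.continuousAt.eventually_ne hu] with v hDv hv
  exact christoffel_smul hη hdet (hDv.differentiableAt two_ne_zero) hv k i j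

-- With `D = ± e^{2φ}` this is the conformal transformation law
-- `Ric = -(n - 2) (∇dφ - dφ ⊗ dφ) - (Δφ + (n - 2) |dφ|²) η` in dimension `n = 4`.
lemma ricci_smul_eq_conformalJacobian (hη : η.IsSymm) (hdet : IsUnit η.det)
    (hD : ContDiffAt ℝ 2 D u) (hu : D u ≠ 0) (i k : Fin 4) :
    ricci (fun v => D v • η) i k u =
      -2 * (conformalJacobian D u i k - conformalCovector D u i * conformalCovector D u k) -
        ((η⁻¹ * conformalJacobian D u).trace +
          2 * (conformalCovector D u ⬝ᵥ η⁻¹ *ᵥ conformalCovector D u)) * η i k := by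
  have hsymm := isSymm_conformalJacobian hD hu
  have hsplit : ricci (fun v => D v • η) i k u =
      ∑ l, connectionMatrix η (conformalJacobian D u l) i l k -
        (connectionMatrix η (conformalJacobian D u k) i).trace +
        ∑ l, ∑ m, (connectionMatrix η (conformalCovector D u) l l m *
            connectionMatrix η (conformalCovector D u) i m k -
          connectionMatrix η (conformalCovector D u) k l m *
            connectionMatrix η (conformalCovector D u) i m l) := by
    simp only [ricci, riemann, pd_christoffel_smul hη hdet hD hu, trace, diag_apply,
      christoffel_smul hη hdet (hD.differentiableAt two_ne_zero) hu, Finset.sum_add_distrib,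
      Finset.sum_sub_distrib]
  rw [hsplit, sum_connectionMatrix_row, trace_connectionMatrix hdet,
    sum_connectionMatrix_quadratic hη hdet, hsymm.eq, hsymm.apply i k, Fintype.card_fin]
  push_cast
  ring

lemma ricci_smul (hη : η.IsSymm) (hdet : IsUnit η.det) (hD : ContDiffAt ℝ 2 D u) (hu : D u ≠ 0)
    (i k : Fin 4) :
    2 * D u ^ 2 * ricci (fun v => D v • η) i k u =
      3 * pd i D u * pd k D u - 2 * D u * coordHessian D u i k -
        D u * (η⁻¹ * coordHessian D u).trace * η i k := by
  rw [ricci_smul_eq_conformalJacobian hη hdet hD hu, conformalJacobian_eq hD hu]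
  simp only [mul_sub, Matrix.mul_smul, trace_sub, trace_smul, mul_vecMulVec, trace_vecMulVec,
    Matrix.sub_apply, Matrix.smul_apply, vecMulVec_apply, smul_eq_mul,
    dotProduct_comm (η⁻¹ *ᵥ conformalCovector D u)]
  simp only [conformalCovector]
  field_simp
  ring

end ConformallyFlat

section LychaginRubtsov

/-- The constant neutral form `2 (dx dp + dy dq)`, to which the reduced Lychagin–Rubtsov metrics
are conformal. -/
def neutralForm (R : Type*) [Zero R] [One R] : Matrix (Fin 4) (Fin 4) R :=
  !![0, 0, 1, 0;
     0, 0, 0, 1;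
     1, 0, 0, 0;
     0, 1, 0, 0]

lemma GD_eq_smul_neutralForm (D : (Fin 4 → ℝ) → ℝ) : GD D = fun v => D v • neutralForm ℝ := by
  ext v i j
  fin_cases i <;> fin_cases j <;> simp [GD, neutralForm]

lemma isSymm_neutralForm (R : Type*) [Zero R] [One R] : (neutralForm R).IsSymm := by
  ext i j
  fin_cases i <;> fin_cases j <;> rfl

lemma neutralForm_mul_self (R : Type*) [CommRing R] : neutralForm R * neutralForm R = 1 := by
  ext i j
  fin_cases i <;> fin_cases j <;> simp [neutralForm, mul_apply, Fin.sum_univ_four]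

lemma trace_neutralForm_mul {R : Type*} [CommRing R] {H : Matrix (Fin 4) (Fin 4) R}
    (hH : H.IsSymm) : (neutralForm R * H).trace = 2 * (H 0 2 + H 1 3) := by
  simp only [trace, diag_apply, mul_apply, Fin.sum_univ_four, ← hH.apply 0 2, ← hH.apply 1 3]
  simp only [neutralForm, of_apply, cons_val', cons_val_zero, cons_val_fin_one, cons_val_one,
    cons_val, zero_mul, add_zero, one_mul, zero_add]
  ring

variable {D : (Fin 4 → ℝ) → ℝ} {u : Fin 4 → ℝ}

lemma ricci_GD (hD : ContDiffAt ℝ 2 D u) (hu : D u ≠ 0) (i k : Fin 4) :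
    2 * D u ^ 2 * ricci (GD D) i k u =
      3 * pd i D u * pd k D u - 2 * D u * coordHessian D u i k -
        2 * D u * (coordHessian D u 0 2 + coordHessian D u 1 3) * neutralForm ℝ i k := by
  have hinv : (neutralForm ℝ)⁻¹ = neutralForm ℝ := inv_eq_right_inv (neutralForm_mul_self ℝ)
  have hdet : IsUnit (neutralForm ℝ).det :=
    isUnit_det_of_right_inverse (neutralForm_mul_self ℝ)
  rw [GD_eq_smul_neutralForm, ricci_smul (isSymm_neutralForm ℝ) hdet hD hu, hinv,
    trace_neutralForm_mul (isSymm_coordHessian hD)]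
  ring

lemma forall_ricci_numerator_eq_zero_iff {R : Type*} [CommRing R] (d : R) (a : Fin 4 → R)
    {H : Matrix (Fin 4) (Fin 4) R} (hH : H.IsSymm) :
    (∀ i k, 3 * a i * a k - 2 * d * H i k -
        2 * d * (H 0 2 + H 1 3) * neutralForm R i k = 0) ↔
      (∀ i, 3 * a i ^ 2 - 2 * d * H i i = 0) ∧
        3 * a 0 * a 1 - 2 * d * H 0 1 = 0 ∧
        3 * a 0 * a 3 - 2 * d * H 0 3 = 0 ∧
        3 * a 2 * a 1 - 2 * d * H 2 1 = 0 ∧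
        3 * a 2 * a 3 - 2 * d * H 2 3 = 0 ∧
        -2 * d * H 1 3 + 3 * a 0 * a 2 - 4 * d * H 0 2 = 0 ∧
        -2 * d * H 0 2 + 3 * a 1 * a 3 - 4 * d * H 1 3 = 0 := by
  have hdiag (i : Fin 4) : neutralForm R i i = 0 := by fin_cases i <;> rfl
  have h02 : neutralForm R 0 2 = 1 := rfl
  have h13 : neutralForm R 1 3 = 1 := rfl
  constructor
  · intro h
    refine ⟨fun i => ?_, ?_, ?_, ?_, ?_, ?_, ?_⟩
    · linear_combination h i i + 2 * d * (H 0 2 + H 1 3) * hdiag i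
    · simpa [neutralForm] using h 0 1
    · simpa [neutralForm] using h 0 3
    · simpa [neutralForm] using h 2 1
    · simpa [neutralForm] using h 2 3
    · linear_combination h 0 2 + 2 * d * (H 0 2 + H 1 3) * h02
    · linear_combination h 1 3 + 2 * d * (H 0 2 + H 1 3) * h13
  · rintro ⟨hii, hxy, hxq, hpy, hpq, hxp, hyq⟩ i k
    wlog hik : i ≤ k generalizing i k with hsymm
    · rw [hH.apply k i, (isSymm_neutralForm R).apply k i]
      linear_combination hsymm k i (le_of_not_ge hik)
    rcases hik.eq_or_lt with rfl | hlt
    · linear_combination hii i - 2 * d * (H 0 2 + H 1 3) * hdiag i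
    obtain ⟨rfl, rfl⟩ | ⟨rfl, rfl⟩ | ⟨rfl, rfl⟩ | ⟨rfl, rfl⟩ | ⟨rfl, rfl⟩ | ⟨rfl, rfl⟩ :
        i = 0 ∧ k = 1 ∨ i = 0 ∧ k = 2 ∨ i = 0 ∧ k = 3 ∨ i = 1 ∧ k = 2 ∨ i = 1 ∧ k = 3 ∨
          i = 2 ∧ k = 3 := by lia
    · simpa [neutralForm] using hxy
    · linear_combination hxp - 2 * d * (H 0 2 + H 1 3) * h02
    · simpa [neutralForm] using hxq
    · simpa [neutralForm, mul_right_comm, hH.apply 1 2] using hpy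
    · linear_combination hyq - 2 * d * (H 0 2 + H 1 3) * h13
    · simpa [neutralForm] using hpq

theorem ricci_flat_iff_PDE_system_general (hD : ContDiffAt ℝ 2 D u) (hu : D u ≠ 0) :
    (∀ i k : Fin 4, ricci (GD D) i k u = 0) ↔
        (∀ i : Fin 4, 3 * (pd i D u) ^ 2 - 2 * D u * pd i (pd i D) u = 0) ∧
        3 * pd 0 D u * pd 1 D u - 2 * D u * pd 0 (pd 1 D) u = 0 ∧
        3 * pd 0 D u * pd 3 D u - 2 * D u * pd 0 (pd 3 D) u = 0 ∧
        3 * pd 2 D u * pd 1 D u - 2 * D u * pd 2 (pd 1 D) u = 0 ∧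
        3 * pd 2 D u * pd 3 D u - 2 * D u * pd 2 (pd 3 D) u = 0 ∧
        -2 * D u * pd 1 (pd 3 D) u + 3 * pd 0 D u * pd 2 D u
          - 4 * D u * pd 0 (pd 2 D) u = 0 ∧
        -2 * D u * pd 0 (pd 2 D) u + 3 * pd 1 D u * pd 3 D u
          - 4 * D u * pd 1 (pd 3 D) u = 0 := by
  have hscale : 2 * D u ^ 2 ≠ 0 := mul_ne_zero two_ne_zero (pow_ne_zero 2 hu)
  calc (∀ i k : Fin 4, ricci (GD D) i k u = 0)
    _ ↔ ∀ i k : Fin 4, 2 * D u ^ 2 * ricci (GD D) i k u = 0 := by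
        simp only [mul_eq_zero_iff_left hscale]
    _ ↔ _ := by
        simp only [ricci_GD hD hu]
        exact forall_ricci_numerator_eq_zero_iff (D u) (fun i => pd i D u)
          (isSymm_coordHessian hD)

end LychaginRubtsov

/-- For `D` smooth and nowhere vanishing on an open set `U ⊆ ℝ⁴`, the Ricci tensor of
the reduced Lychagin–Rubtsov metric `G_D` vanishes identically on `U` if and only if
`D` satisfies the stated system of second-order PDEs on `U`.
Coordinates: `x = 0`, `y = 1`, `p = 2`, `q = 3`. -/
theorem ricci_flat_iff_PDE_system (U : Set (Fin 4 → ℝ)) (hU : IsOpen U)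
    (D : (Fin 4 → ℝ) → ℝ) (hD : ContDiffOn ℝ (⊤ : ℕ∞) D U)
    (hD0 : ∀ u ∈ U, D u ≠ 0) :
    (∀ u ∈ U, ∀ i k : Fin 4, ricci (GD D) i k u = 0) ↔
      (∀ u ∈ U,
        (∀ i : Fin 4, 3 * (pd i D u) ^ 2 - 2 * D u * pd i (pd i D) u = 0) ∧
        3 * pd 0 D u * pd 1 D u - 2 * D u * pd 0 (pd 1 D) u = 0 ∧
        3 * pd 0 D u * pd 3 D u - 2 * D u * pd 0 (pd 3 D) u = 0 ∧
        3 * pd 2 D u * pd 1 D u - 2 * D u * pd 2 (pd 1 D) u = 0 ∧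
        3 * pd 2 D u * pd 3 D u - 2 * D u * pd 2 (pd 3 D) u = 0 ∧
        -2 * D u * pd 1 (pd 3 D) u + 3 * pd 0 D u * pd 2 D u
          - 4 * D u * pd 0 (pd 2 D) u = 0 ∧
        -2 * D u * pd 0 (pd 2 D) u + 3 * pd 1 D u * pd 3 D u
          - 4 * D u * pd 1 (pd 3 D) u = 0) := by
  refine forall₂_congr fun u hu => ricci_flat_iff_PDE_system_general ?_ (hD0 u hu)
  exact (hD.contDiffAt (hU.mem_nhds hu)).of_le (WithTop.coe_le_coe.2 le_top)
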